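/- The backward implicit action function is strictly monotone in the initial value: for every x₀ ∈ M and u₁ < u₂ in ℝ, one has h_{x₀,u₁}(x,t) < h_{x₀,u₂}(x,t) for all t > 0 and all x ∈ M. (Proposition 2.2(2), Monotonicity.) -/

import Mathlib

open Filter MeasureTheory Set
open scoped RealInnerProductSpace Topology NNReal

noncomputable section

/-- The model space: the closed manifold `M` is realized as a compact subset of a
Euclidean space (Whitney embedding), and the fibers of `T*M` as Euclidean vectors. -/
abbrev Euc (n : ℕ) := EuclideanSpace ℝ (Fin n)

variable {n : ℕ}

/-- `∂H/∂p`, the gradient of `H` in the momentum variable. -/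
def pGrad (H : Euc n → Euc n → ℝ → ℝ) (x p : Euc n) (u : ℝ) : Euc n :=
  gradient (fun q => H x q u) p

/-- `∂H/∂x`, the gradient of `H` in the position variable. -/
def xGrad (H : Euc n → Euc n → ℝ → ℝ) (x p : Euc n) (u : ℝ) : Euc n :=
  gradient (fun y => H y p u) x

/-- `∂H/∂u`, the derivative of `H` in the value variable. -/
def uDeriv (H : Euc n → Euc n → ℝ → ℝ) (x p : Euc n) (u : ℝ) : ℝ :=
  deriv (fun w => H x p w) u

/-- The contact Hamiltonian vector field
`ẋ = ∂H/∂p, ṗ = −∂H/∂x − (∂H/∂u)p, u̇ = (∂H/∂p)·p − H`. -/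
def contactVF (H : Euc n → Euc n → ℝ → ℝ) :
    Euc n × Euc n × ℝ → Euc n × Euc n × ℝ := fun z =>
  (pGrad H z.1 z.2.1 z.2.2,
   -xGrad H z.1 z.2.1 z.2.2 - uDeriv H z.1 z.2.1 z.2.2 • z.2.1,
   ⟪pGrad H z.1 z.2.1 z.2.2, z.2.1⟫ - H z.1 z.2.1 z.2.2)

/-- (H1) Positive definiteness of `∂²H/∂p²`. -/
def PosDefInP (H : Euc n → Euc n → ℝ → ℝ) : Prop :=
  ∀ x u p v, v ≠ 0 → 0 < ⟪(fderiv ℝ (fun q => pGrad H x q u) p) v, v⟫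

/-- (H2) Superlinearity of `H` in `p`. -/
def Superlinear (H : Euc n → Euc n → ℝ → ℝ) : Prop :=
  ∀ x u, Tendsto (fun p : Euc n => H x p u / ‖p‖) (cocompact (Euc n)) atTop

/-- (H3) `|∂H/∂u| ≤ λ`. -/
def LipInU (H : Euc n → Euc n → ℝ → ℝ) (lam : ℝ) : Prop :=
  ∀ x p u, |uDeriv H x p u| ≤ lam

/-- `H` is a `C³` function. -/
def C3 (H : Euc n → Euc n → ℝ → ℝ) : Prop :=
  ContDiff ℝ 3 (fun z : Euc n × Euc n × ℝ => H z.1 z.2.1 z.2.2)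

/-- `L` is the Legendre transform of `H`: `L(x,v,u) = sup_p {⟨p,v⟩ − H(x,p,u)}`. -/
def IsLegendre (H L : Euc n → Euc n → ℝ → ℝ) : Prop :=
  ∀ x v u, L x v u = sSup {r | ∃ p : Euc n, r = ⟪p, v⟫ - H x p u}

/-- `Φ` is the (complete) flow of the contact Hamiltonian vector field `X_H`. -/
def IsContactFlow (H : Euc n → Euc n → ℝ → ℝ)
    (Φ : ℝ → Euc n × Euc n × ℝ → Euc n × Euc n × ℝ) : Prop :=
  (∀ z, Φ 0 z = z) ∧ ∀ z t, HasDerivAt (fun s => Φ s z) (contactVF H (Φ t z)) t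

/-- Absolutely continuous curve on `[a,b]`: an indefinite integral of an integrable map. -/
def AbsCont (γ : ℝ → Euc n) (a b : ℝ) : Prop :=
  ∃ g : ℝ → Euc n, IntervalIntegrable g volume a b ∧
    ∀ s ∈ Icc a b, γ s = γ a + ∫ τ in a..s, g τ

/-- The superdifferential `D⁺φ(x)` of `φ` at `x` (relative to `M`):
`limsup_{y→x} (φ(y) − φ(x) − ⟨p, y−x⟩)/|y−x| ≤ 0`. -/
def SuperDiff (M : Set (Euc n)) (φ : Euc n → ℝ) (x : Euc n) : Set (Euc n) :=
  {p | ∀ ε > (0:ℝ), ∀ᶠ y in 𝓝[M \ {x}] x,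
      φ y - φ x - ⟪p, y - x⟫ ≤ ε * ‖y - x‖}

/-- `φ` is a viscosity subsolution of `H(x,∂ₓu,u) = c` on `U`:
`H(x,p,φ(x)) ≤ c` for every `x ∈ U` and `p ∈ D⁺φ(x)`. -/
def IsVSub (M : Set (Euc n)) (H : Euc n → Euc n → ℝ → ℝ) (c : ℝ)
    (φ : Euc n → ℝ) (U : Set (Euc n)) : Prop :=
  ∀ x ∈ U, ∀ p ∈ SuperDiff M φ x, H x p (φ x) ≤ c

/-- `φ` is a strict viscosity subsolution of `H(x,∂ₓu,u) = 0` on `M`: a viscosity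
subsolution which is strict at every point of `M`. -/
def IsStrictVSub (M : Set (Euc n)) (H : Euc n → Euc n → ℝ → ℝ)
    (φ : Euc n → ℝ) : Prop :=
  IsVSub M H 0 φ M ∧
  ∀ x₀ ∈ M, ∃ V : Set (Euc n), IsOpen V ∧ x₀ ∈ V ∧
    ∃ c < (0:ℝ), IsVSub M H c φ (V ∩ M)

/-- The backward solution semigroup `T_t⁻`: the continuous function satisfying
`T_t⁻φ(x) = inf_{γ(t)=x} {φ(γ(0)) + ∫₀ᵗ L(γ,γ̇,T_τ⁻φ(γ(τ))) dτ}` over absolutely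
continuous curves in `M`. -/
def IsBackwardSemigroup (M : Set (Euc n)) (L : Euc n → Euc n → ℝ → ℝ)
    (φ : Euc n → ℝ) (Tm : ℝ → Euc n → ℝ) : Prop :=
  (∀ x ∈ M, Tm 0 x = φ x) ∧
  ContinuousOn (fun q : ℝ × Euc n => Tm q.1 q.2) (Ici 0 ×ˢ M) ∧
  ∀ t > (0:ℝ), ∀ x ∈ M,
    Tm t x = sInf {r | ∃ γ : ℝ → Euc n, AbsCont γ 0 t ∧
      (∀ τ ∈ Icc (0:ℝ) t, γ τ ∈ M) ∧ γ t = x ∧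
      r = φ (γ 0) + ∫ τ in (0:ℝ)..t, L (γ τ) (deriv γ τ) (Tm τ (γ τ))}

/-- The forward solution semigroup `T_t⁺`: the continuous function satisfying
`T_t⁺φ(x) = sup_{γ(0)=x} {φ(γ(t)) − ∫₀ᵗ L(γ,γ̇,T_{t−τ}⁺φ(γ(τ))) dτ}` over absolutely
continuous curves in `M`. -/
def IsForwardSemigroup (M : Set (Euc n)) (L : Euc n → Euc n → ℝ → ℝ)
    (φ : Euc n → ℝ) (Tp : ℝ → Euc n → ℝ) : Prop :=
  (∀ x ∈ M, Tp 0 x = φ x) ∧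
  ContinuousOn (fun q : ℝ × Euc n => Tp q.1 q.2) (Ici 0 ×ˢ M) ∧
  ∀ t > (0:ℝ), ∀ x ∈ M,
    Tp t x = sSup {r | ∃ γ : ℝ → Euc n, AbsCont γ 0 t ∧
      (∀ τ ∈ Icc (0:ℝ) t, γ τ ∈ M) ∧ γ 0 = x ∧
      r = φ (γ t) - ∫ τ in (0:ℝ)..t, L (γ τ) (deriv γ τ) (Tp (t - τ) (γ τ))}

/-- The backward implicit action function `h_{x₀,u₀}(x,t)`, characterized by the
implicit variational principle over Lipschitz curves. -/
def IsBackwardAction (M : Set (Euc n)) (L : Euc n → Euc n → ℝ → ℝ)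
    (hb : Euc n → ℝ → Euc n → ℝ → ℝ) : Prop :=
  ContinuousOn (fun q : Euc n × ℝ × Euc n × ℝ => hb q.1 q.2.1 q.2.2.1 q.2.2.2)
    (M ×ˢ (univ : Set ℝ) ×ˢ M ×ˢ Ioi 0) ∧
  ∀ x₀ ∈ M, ∀ u₀ : ℝ, ∀ x ∈ M, ∀ t > (0:ℝ),
    hb x₀ u₀ x t = u₀ + sInf {a | ∃ γ : ℝ → Euc n,
      (∃ K : ℝ≥0, LipschitzOnWith K γ (Icc 0 t)) ∧
      (∀ τ ∈ Icc (0:ℝ) t, γ τ ∈ M) ∧ γ 0 = x₀ ∧ γ t = x ∧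
      a = ∫ τ in (0:ℝ)..t, L (γ τ) (deriv γ τ) (hb x₀ u₀ (γ τ) τ)}

/-- The forward implicit action function `h^{x₀,u₀}(x,t)`, characterized by the
implicit variational principle over Lipschitz curves. -/
def IsForwardAction (M : Set (Euc n)) (L : Euc n → Euc n → ℝ → ℝ)
    (hf : Euc n → ℝ → Euc n → ℝ → ℝ) : Prop :=
  ContinuousOn (fun q : Euc n × ℝ × Euc n × ℝ => hf q.1 q.2.1 q.2.2.1 q.2.2.2)
    (M ×ˢ (univ : Set ℝ) ×ˢ M ×ˢ Ioi 0) ∧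
  ∀ x₀ ∈ M, ∀ u₀ : ℝ, ∀ x ∈ M, ∀ t > (0:ℝ),
    hf x₀ u₀ x t = u₀ - sInf {a | ∃ γ : ℝ → Euc n,
      (∃ K : ℝ≥0, LipschitzOnWith K γ (Icc 0 t)) ∧
      (∀ τ ∈ Icc (0:ℝ) t, γ τ ∈ M) ∧ γ 0 = x ∧ γ t = x₀ ∧
      a = ∫ τ in (0:ℝ)..t, L (γ τ) (deriv γ τ) (hf x₀ u₀ (γ τ) (t - τ))}

/-- The epigraph `Γ_φ = {(x,p,u) ∈ T*M × ℝ : u ≥ φ(x)}`. -/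
def Epi (M : Set (Euc n)) (φ : Euc n → ℝ) : Set (Euc n × Euc n × ℝ) :=
  {z | z.1 ∈ M ∧ φ z.1 ≤ z.2.2}

/-- The interior `Γ̊_φ = {(x,p,u) ∈ T*M × ℝ : u > φ(x)}` of the epigraph. -/
def EpiInt (M : Set (Euc n)) (φ : Euc n → ℝ) : Set (Euc n × Euc n × ℝ) :=
  {z | z.1 ∈ M ∧ φ z.1 < z.2.2}

/-- Piecewise `C¹` curve on `[a,b]`. -/
def PiecewiseC1On (γ : ℝ → Euc n) (a b : ℝ) : Prop :=
  ContinuousOn γ (Icc a b) ∧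
  ∃ (k : ℕ) (τ : ℕ → ℝ), τ 0 = a ∧ τ k = b ∧ (∀ i < k, τ i < τ (i + 1)) ∧
    ∀ i < k, ContDiffOn ℝ 1 γ (Icc (τ i) (τ (i + 1)))


/-!
The idea is to transport the values backward along a curve that is almost optimal for the larger
initial value `u₂`. If `h₁(x, t) ≥ h₂(x, t)`, take a curve `σ` from `x₀` to `x` whose action
realizes `h₂(x, t)` up to `ε`. Dynamic programming along `σ`, exact up to `ε` for `h₂` and an
inequality for `h₁`, together with the Lipschitz dependence of `L` on the value, gives a backward
Grönwall inequality for `s ↦ h₂(σ s, s) - h₁(σ s, s)`, hence the bound `ε * exp (lam * (t - s))`.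
Letting `s → 0` and then `ε → 0` yields `u₂ ≤ u₁`.

An implicit action may a priori be unbounded near time `0`, so neither integrability of the
Lagrangian along a curve nor boundedness of the set of actions is known in advance. Both follow from
a lower bound on the implicit action, itself obtained by Grönwall along almost optimal curves.
-/

section Gronwall

theorem intervalIntegrable_mono_Icc {f : ℝ → ℝ} {a b r s : ℝ} (hf : IntervalIntegrable f volume a b)
    (har : a ≤ r) (hrs : r ≤ s) (hsb : s ≤ b) : IntervalIntegrable f volume r s := by
  refine hf.mono_set ?_
  rw [uIcc_of_le hrs, uIcc_of_le (har.trans (hrs.trans hsb))]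
  exact Icc_subset_Icc har hsb

theorem le_mul_exp_of_le_integral {f : ℝ → ℝ} {a b c K : ℝ} (hK : 0 ≤ K)
    (hf : ContinuousOn f (Icc a b)) (h : ∀ t ∈ Icc a b, f t ≤ c + K * ∫ s in a..t, f s) :
    ∀ t ∈ Icc a b, f t ≤ c * Real.exp (K * (t - a)) := by
  intro t ht
  have hab : a ≤ b := ht.1.trans ht.2
  have hint : IntervalIntegrable f volume a b := hf.intervalIntegrable_of_Icc hab
  have hprim : ContinuousOn (fun s => c + K * ∫ q in a..s, f q) (Icc a b) := by
    have := intervalIntegral.continuousOn_primitive_interval' hint left_mem_uIcc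
    rw [uIcc_of_le hab] at this
    exact (this.const_mul K).const_add c
  have hderiv : ∀ s ∈ Ico a b,
      HasDerivWithinAt (fun s => c + K * ∫ q in a..s, f q) (K * f s) (Ici s) s := by
    intro s hs
    have hsub : Icc a b ∈ 𝓝[>] s := mem_of_superset (Ioc_mem_nhdsGT hs.2) fun q hq =>
      ⟨hs.1.trans hq.1.le, hq.2⟩
    have hints : IntervalIntegrable f volume a s :=
      (hf.mono (Icc_subset_Icc_right hs.2.le)).intervalIntegrable_of_Icc hs.1
    exact ((intervalIntegral.integral_hasDerivWithinAt_right hints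
      ⟨_, hsub, hf.aestronglyMeasurable measurableSet_Icc⟩
      ((hf s (Ico_subset_Icc_self hs)).mono_of_mem_nhdsWithin hsub)).const_mul K).const_add c
  have hbound := le_gronwallBound_of_liminf_deriv_right_le (δ := c) (K := K) (ε := 0) hprim
    (fun s hs r hr => (hderiv s hs).liminf_right_slope_le hr) (by simp)
    (fun s hs => by
      rw [add_zero]
      exact mul_le_mul_of_nonneg_left (h s (Ico_subset_Icc_self hs)) hK) t ht
  rw [gronwallBound_ε0] at hbound
  exact (h t ht).trans hbound

theorem exists_nonpos_forall_mem_Ioc_pos {f : ℝ → ℝ} {a b : ℝ} (hab : a ≤ b)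
    (hf : ContinuousOn f (Icc a b)) (ha : f a ≤ 0) (hb : 0 < f b) :
    ∃ r ∈ Ico a b, f r ≤ 0 ∧ ∀ q ∈ Ioc r b, 0 < f q := by
  have hcomp : IsCompact (Icc a b ∩ f ⁻¹' Iic 0) :=
    isCompact_Icc.of_isClosed_subset (hf.preimage_isClosed_of_isClosed isClosed_Icc isClosed_Iic)
      inter_subset_left
  obtain ⟨r, ⟨hr, hfr⟩, hmax⟩ := hcomp.exists_isGreatest ⟨a, left_mem_Icc.mpr hab, ha⟩
  refine ⟨r, ⟨hr.1, hr.2.lt_of_ne ?_⟩, hfr, fun q hq => ?_⟩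
  · rintro rfl
    exact hb.not_ge hfr
  · by_contra! hfq
    exact (hmax ⟨⟨hr.1.trans hq.1.le, hq.2⟩, hfq⟩).not_gt hq.1

/-- The integral inequality is only required on intervals of positivity that start at a nonpositive
value, which is what lets `|f|` be replaced by `f` when it is verified. -/
theorem le_mul_exp_of_le_integral_of_pos {f : ℝ → ℝ} {a b c K : ℝ} (hc : 0 ≤ c) (hK : 0 ≤ K)
    (hf : ContinuousOn f (Icc a b)) (ha : f a ≤ 0)
    (h : ∀ r s, a ≤ r → r < s → s ≤ b → f r ≤ 0 → (∀ q ∈ Ioc r s, 0 < f q) →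
      f s ≤ c + K * ∫ q in r..s, f q) :
    ∀ t ∈ Icc a b, f t ≤ c * Real.exp (K * (t - a)) := by
  set g : ℝ → ℝ := fun s => max (f s) 0
  have hg : ContinuousOn g (Icc a b) := hf.sup continuousOn_const
  have hg0 : ∀ s, 0 ≤ g s := fun s => le_max_right _ _
  have hgi : ∀ r s, a ≤ r → r ≤ s → s ≤ b → IntervalIntegrable g volume r s :=
    fun r s hr hrs hs => (hg.mono (Icc_subset_Icc hr hs)).intervalIntegrable_of_Icc hrs
  have hg_le : ∀ s ∈ Icc a b, g s ≤ c + K * ∫ q in a..s, g q := by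
    intro s hs
    have hint : 0 ≤ ∫ q in a..s, g q := intervalIntegral.integral_nonneg hs.1 fun q _ => hg0 q
    refine max_le ?_ (by positivity)
    rcases le_or_gt (f s) 0 with hfs | hfs
    · exact hfs.trans (by positivity)
    obtain ⟨r, hr, hfr, hpos⟩ := exists_nonpos_forall_mem_Ioc_pos hs.1
      (hf.mono (Icc_subset_Icc_right hs.2)) ha hfs
    have hfg : ∫ q in r..s, f q = ∫ q in r..s, g q :=
      intervalIntegral.integral_congr_Ioo_of_le hr.2.le fun q hq =>
        (max_eq_left (hpos q (Ioo_subset_Ioc_self hq)).le).symm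
    have hle : ∫ q in r..s, g q ≤ ∫ q in a..s, g q := by
      rw [← intervalIntegral.integral_add_adjacent_intervals
        (hgi a r le_rfl hr.1 (hr.2.le.trans hs.2)) (hgi r s hr.1 hr.2.le hs.2)]
      exact le_add_of_nonneg_left (intervalIntegral.integral_nonneg hr.1 fun q _ => hg0 q)
    calc f s ≤ c + K * ∫ q in r..s, f q := h r s hr.1 hr.2 hs.2 hfr hpos
      _ ≤ c + K * ∫ q in a..s, g q := by rw [hfg]; gcongr
  exact fun t ht => (le_max_left _ _).trans (le_mul_exp_of_le_integral hK hg hg_le t ht)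

theorem le_mul_exp_of_le_integral_of_pos_left {f : ℝ → ℝ} {a b c K : ℝ} (hc : 0 ≤ c) (hK : 0 ≤ K)
    (hf : ContinuousOn f (Icc a b)) (hb : f b ≤ 0)
    (h : ∀ r s, a ≤ r → r < s → s ≤ b → f s ≤ 0 → (∀ q ∈ Ico r s, 0 < f q) →
      f r ≤ c + K * ∫ q in r..s, f q) :
    ∀ t ∈ Icc a b, f t ≤ c * Real.exp (K * (b - t)) := by
  intro t ht
  have hneg : ContinuousOn (fun s => f (-s)) (Icc (-b) (-a)) :=
    hf.comp continuousOn_neg fun s hs => ⟨le_neg.mp hs.2, neg_le.mp hs.1⟩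
  have := le_mul_exp_of_le_integral_of_pos hc hK hneg (by simpa using hb)
    (fun r s hr hrs hs hfr hpos => by
      rw [intervalIntegral.integral_comp_neg]
      exact h (-s) (-r) (le_neg.mp hs) (neg_lt_neg hrs) (neg_le.mp hr) hfr fun q hq => by
        simpa using hpos (-q) ⟨lt_neg.mp hq.2, neg_le.mp hq.1⟩) (-t)
    ⟨neg_le_neg ht.2, neg_le_neg ht.1⟩
  simpa [sub_eq_add_neg, add_comm] using this

theorem neg_mul_exp_le_integral_of_le {g : ℝ → ℝ} {B K t : ℝ} (hB : 0 ≤ B) (hK : 0 ≤ K)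
    (ht : 0 ≤ t) (hg : IntervalIntegrable g volume 0 t)
    (h : ∀ s ∈ Ioo 0 t, -B - K * |∫ q in (0 : ℝ)..s, g q| ≤ g s) :
    -(B * t * Real.exp (K * t)) ≤ ∫ q in (0 : ℝ)..t, g q := by
  set F : ℝ → ℝ := fun s => -∫ q in (0 : ℝ)..s, g q
  have hF : ContinuousOn F (Icc 0 t) := by
    have := intervalIntegral.continuousOn_primitive_interval' hg left_mem_uIcc
    rw [uIcc_of_le ht] at this
    exact this.neg
  suffices F t ≤ B * t * Real.exp (K * (t - 0)) by
    rw [sub_zero] at this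
    exact neg_le.mp this
  refine le_mul_exp_of_le_integral_of_pos (by positivity) hK hF (by simp [F])
    (fun r s hr hrs hs hFr hpos => ?_) t (right_mem_Icc.mpr ht)
  have hFi : IntervalIntegrable F volume r s :=
    (hF.mono (Icc_subset_Icc hr hs)).intervalIntegrable_of_Icc hrs.le
  have hgi : IntervalIntegrable g volume r s := intervalIntegrable_mono_Icc hg hr hrs.le hs
  have hsplit := intervalIntegral.integral_add_adjacent_intervals
    (intervalIntegrable_mono_Icc hg le_rfl hr (hrs.le.trans hs)) hgi
  have hincr : ∫ q in r..s, -g q ≤ ∫ q in r..s, (B + K * F q) := by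
    refine intervalIntegral.integral_mono_on_of_le_Ioo hrs.le hgi.neg
      (intervalIntegrable_const.add (hFi.const_mul K)) fun q hq => ?_
    have hgq := h q ⟨hr.trans_lt hq.1, hq.2.trans_le hs⟩
    rw [← abs_neg, abs_of_pos (hpos q (Ioo_subset_Ioc_self hq))] at hgq
    linarith
  rw [intervalIntegral.integral_neg, intervalIntegral.integral_add intervalIntegrable_const
    (hFi.const_mul K), intervalIntegral.integral_const, intervalIntegral.integral_const_mul,
    smul_eq_mul] at hincr
  have hBt : (s - r) * B ≤ B * t := by
    rw [mul_comm]; gcongr; linarith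
  simp only [F] at hFr hincr ⊢
  linarith

end Gronwall

section Convexity

theorem convexOn_univ_of_inner_fderiv_gradient_nonneg {E : Type*} [NormedAddCommGroup E]
    [InnerProductSpace ℝ E] [CompleteSpace E] {f : E → ℝ} (hf : Differentiable ℝ f)
    (hf' : Differentiable ℝ (gradient f)) (h : ∀ p v, 0 ≤ ⟪fderiv ℝ (gradient f) p v, v⟫) :
    ConvexOn ℝ univ f := by
  have hline : ∀ p v, ConvexOn ℝ univ fun s : ℝ => f (p + s • v) := by
    intro p v
    have haff : ∀ s : ℝ, HasDerivAt (fun s : ℝ => p + s • v) v s := fun s => by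
      simpa using ((hasDerivAt_id s).smul_const v).const_add p
    have hd : ∀ s : ℝ, HasDerivAt (fun s => f (p + s • v)) ⟪gradient f (p + s • v), v⟫ s :=
      fun s => (hf _).hasGradientAt.hasFDerivAt.comp_hasDerivAt s (haff s)
    have hd2 : ∀ s : ℝ, HasDerivAt (fun s => ⟪gradient f (p + s • v), v⟫)
        ⟪fderiv ℝ (gradient f) (p + s • v) v, v⟫ s := fun s => by
      simpa using ((hf' _).hasFDerivAt.comp_hasDerivAt s (haff s)).inner ℝ (hasDerivAt_const s v)
    have hderiv : deriv (fun s : ℝ => f (p + s • v)) = fun s => ⟪gradient f (p + s • v), v⟫ :=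
      funext fun s => (hd s).deriv
    refine convexOn_univ_of_deriv2_nonneg (fun s => (hd s).differentiableAt) ?_ fun s => ?_
    · rw [hderiv]
      exact fun s => (hd2 s).differentiableAt
    · rw [Function.iterate_succ_apply, Function.iterate_one, hderiv, (hd2 s).deriv]
      exact h _ v
  refine ⟨convex_univ, fun p _ q _ a b ha hb hab => ?_⟩
  have hconv := (hline p (q - p)).2 (mem_univ 0) (mem_univ 1) ha hb hab
  have hpt : p + b • (q - p) = a • p + b • q := by
    rw [← eq_sub_iff_add_eq] at hab
    rw [hab]; module
  simpa [hpt] using hconv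

theorem tendsto_sub_mul_norm_atTop_of_superlinear {E : Type*} [NormedAddCommGroup E] {f : E → ℝ}
    (hf : Tendsto (fun p => f p / ‖p‖) (Bornology.cobounded E) atTop) (K : ℝ) :
    Tendsto (fun p => f p - K * ‖p‖) (Bornology.cobounded E) atTop := by
  have hnorm : Tendsto (fun p : E => ‖p‖) (Bornology.cobounded E) atTop :=
    tendsto_norm_cobounded_atTop
  have hprod := (tendsto_atTop_add_const_right _ (-K) hf).atTop_mul_atTop₀ hnorm
  refine hprod.congr' ?_
  filter_upwards [hnorm.eventually_gt_atTop 0] with p hp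
  field_simp
  ring

variable {E : Type*} [NormedAddCommGroup E] [NormedSpace ℝ E]

theorem mul_norm_add_lt_of_convexOn_of_sphere {f : E → ℝ} (hf : ConvexOn ℝ univ f) {K R : ℝ}
    (hR : 0 < R) (h : ∀ p, ‖p‖ = R → K * R + f 0 < f p) {p : E} (hp : R ≤ ‖p‖) :
    K * ‖p‖ + f 0 < f p := by
  have hp0 : 0 < ‖p‖ := hR.trans_le hp
  have hsphere : K * R + f 0 < f ((R / ‖p‖) • p) := h _ <| by
    rw [norm_smul, norm_div, norm_norm, Real.norm_of_nonneg hR.le, div_mul_cancel₀ _ hp0.ne']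
  have hconv := hf.2 (mem_univ 0) (mem_univ p)
    (sub_nonneg.mpr ((div_le_one hp0).mpr hp)) (by positivity : 0 ≤ R / ‖p‖) (by ring)
  simp only [smul_eq_mul, smul_zero, zero_add] at hconv
  have hratio : K * R < R / ‖p‖ * (f p - f 0) := by linarith
  rw [div_mul_eq_mul_div, lt_div_iff₀ hp0] at hratio
  have := lt_of_mul_lt_mul_left (by linarith : R * (K * ‖p‖) < R * (f p - f 0)) hR.le
  linarith

section Uniform

variable {X : Type*} [TopologicalSpace X] [ProperSpace E] {f : X → E → ℝ} {S : Set X}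

theorem eventually_forall_mul_norm_add_lt (hS : IsCompact S)
    (hf : Continuous (Function.uncurry f)) (hconv : ∀ x, ConvexOn ℝ univ (f x))
    (hsup : ∀ x, Tendsto (fun p => f x p / ‖p‖) (Bornology.cobounded E) atTop) (K : ℝ) :
    ∀ᶠ p in Bornology.cobounded E, ∀ x ∈ S, K * ‖p‖ + f x 0 < f x p := by
  refine hS.induction_on (p := fun T => ∀ᶠ p in Bornology.cobounded E, ∀ x ∈ T,
    K * ‖p‖ + f x 0 < f x p) (by simp) (fun T T' hT h => h.mono fun p hp x hx => hp x (hT hx))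
    (fun T T' h h' => ?_) fun x _ => ?_
  · filter_upwards [h, h'] with p hp hp'
    rintro x (hx | hx)
    exacts [hp x hx, hp' x hx]
  obtain ⟨R₀, -, hR₀⟩ := (hasBasis_cobounded_norm.eventually_iff).mp
    ((tendsto_sub_mul_norm_atTop_of_superlinear (hsup x) K).eventually_gt_atTop (f x 0))
  set R := max R₀ 1
  have hR : 0 < R := one_pos.trans_le (le_max_right _ _)
  have hopen : IsOpen {z : X × E | K * R + f z.1 0 < f z.1 z.2} :=
    isOpen_lt (continuous_const.add (hf.comp (continuous_fst.prodMk continuous_const))) hf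
  have hnear : ∀ᶠ y in 𝓝 x, ∀ p ∈ Metric.sphere (0 : E) R, K * R + f y 0 < f y p := by
    refine (isCompact_sphere (0 : E) R).eventually_forall_of_forall_eventually
      fun p hp => hopen.mem_nhds ?_
    have hpR : ‖p‖ = R := mem_sphere_zero_iff_norm.mp hp
    have := hR₀ (show R₀ ≤ ‖p‖ from hpR ▸ le_max_left _ _)
    rw [hpR] at this
    exact lt_sub_iff_add_lt'.mp this
  refine ⟨_, mem_nhdsWithin_of_mem_nhds hnear, ?_⟩
  filter_upwards [tendsto_norm_cobounded_atTop.eventually_ge_atTop R] with p hp y hy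
  exact mul_norm_add_lt_of_convexOn_of_sphere (hconv y) hR
    (fun q hq => hy q (mem_sphere_zero_iff_norm.mpr hq)) hp

theorem exists_forall_mul_norm_sub_le (hS : IsCompact S)
    (hf : Continuous (Function.uncurry f)) (hconv : ∀ x, ConvexOn ℝ univ (f x))
    (hsup : ∀ x, Tendsto (fun p => f x p / ‖p‖) (Bornology.cobounded E) atTop) (K : ℝ) :
    ∃ C, ∀ x ∈ S, ∀ p, K * ‖p‖ - C ≤ f x p := by
  obtain ⟨R₀, -, hR₀⟩ := hasBasis_cobounded_norm.eventually_iff.mp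
    (eventually_forall_mul_norm_add_lt hS hf hconv hsup K)
  set R := max R₀ 0
  obtain ⟨m, hm⟩ := ((hS.prod (isCompact_closedBall (0 : E) R)).image hf).bddBelow
  have hball : ∀ x ∈ S, ∀ p, ‖p‖ ≤ R → m ≤ f x p := fun x hx p hp =>
    hm ⟨(x, p), ⟨hx, mem_closedBall_zero_iff.mpr hp⟩, rfl⟩
  have hR : 0 ≤ R := le_max_right _ _
  refine ⟨|K| * R - m, fun x hx p => ?_⟩
  rcases le_total R ‖p‖ with hp | hp
  · have hfar := hR₀ (show R₀ ≤ ‖p‖ from (le_max_left _ _).trans hp) x hx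
    have hm0 := hball x hx 0 (norm_zero.trans_le hR)
    have : 0 ≤ |K| * R := by positivity
    linarith
  · have : K * ‖p‖ ≤ |K| * R := by gcongr; exact le_abs_self K
    linarith [hball x hx p hp]

end Uniform

end Convexity

section Curves

variable {X : Type*} [PseudoEMetricSpace X]

theorem lipschitzOnWith_congr {Y : Type*} [PseudoEMetricSpace Y] {f g : X → Y} {K : ℝ≥0} {S : Set X}
    (hf : LipschitzOnWith K f S) (hgf : EqOn g f S) : LipschitzOnWith K g S := by
  intro x hx y hy
  rw [hgf hx, hgf hy]
  exact hf hx hy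

theorem lipschitzOnWith_Icc_of_adjacent {f : ℝ → X} {K : ℝ≥0} {a b c : ℝ}
    (hab : LipschitzOnWith K f (Icc a b)) (hbc : LipschitzOnWith K f (Icc b c)) :
    LipschitzOnWith K f (Icc a c) := by
  suffices h : ∀ x ∈ Icc a c, ∀ y ∈ Icc a c, x ≤ y → edist (f x) (f y) ≤ K * edist x y by
    intro x hx y hy
    rcases le_total x y with hxy | hxy
    · exact h x hx y hy hxy
    · rw [edist_comm, edist_comm x]
      exact h y hy x hx hxy
  intro x hx y hy hxy
  rcases le_total y b with hyb | hby
  · exact hab ⟨hx.1, hxy.trans hyb⟩ ⟨hy.1, hyb⟩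
  rcases le_total b x with hbx | hxb
  · exact hbc ⟨hbx, hx.2⟩ ⟨hby, hy.2⟩
  calc edist (f x) (f y) ≤ edist (f x) (f b) + edist (f b) (f y) := edist_triangle _ _ _
    _ ≤ K * edist x b + K * edist b y := add_le_add
      (hab ⟨hx.1, hxb⟩ ⟨hx.1.trans hxb, le_rfl⟩) (hbc ⟨le_rfl, hby.trans hy.2⟩ ⟨hby, hy.2⟩)
    _ = K * edist x y := by
      rw [← mul_add, edist_comm x b, edist_comm b y, edist_comm x y, edist_dist, edist_dist,
        edist_dist, ← ENNReal.ofReal_add dist_nonneg dist_nonneg, Real.dist_eq, Real.dist_eq,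
        Real.dist_eq, abs_of_nonneg (sub_nonneg.mpr hxb), abs_of_nonneg (sub_nonneg.mpr hby),
        abs_of_nonneg (sub_nonneg.mpr hxy), sub_add_sub_cancel']

/-- The curve that follows `η` up to time `s` and `γ` afterwards. -/
def concatAt {Y : Type*} (s : ℝ) (η γ : ℝ → Y) : ℝ → Y :=
  (Iic s).piecewise η γ

theorem eqOn_concatAt_Iic {Y : Type*} (s : ℝ) (η γ : ℝ → Y) :
    EqOn (concatAt s η γ) η (Iic s) :=
  piecewise_eqOn _ _ _

theorem eqOn_concatAt_Ici {Y : Type*} {s : ℝ} {η γ : ℝ → Y} (h : η s = γ s) :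
    EqOn (concatAt s η γ) γ (Ici s) := by
  intro τ hτ
  rcases (mem_Ici.mp hτ).eq_or_lt with rfl | hτ
  · exact (eqOn_concatAt_Iic _ η γ self_mem_Iic).trans h
  · exact piecewise_eq_of_notMem _ _ _ hτ.not_ge

/-- The competitors in the implicit variational principle: Lipschitz curves on `[0, t]` with values
in `M` that start at `x₀`. Values outside `[0, t]` are irrelevant. -/
structure IsAdmissibleCurve (M : Set X) (x₀ : X) (t : ℝ) (γ : ℝ → X) : Prop where
  exists_lipschitzOnWith : ∃ K : ℝ≥0, LipschitzOnWith K γ (Icc 0 t)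
  mapsTo : MapsTo γ (Icc 0 t) M
  apply_zero : γ 0 = x₀

namespace IsAdmissibleCurve

variable {M : Set X} {x₀ y₀ : X} {s t : ℝ} {γ η : ℝ → X}

theorem mono (hγ : IsAdmissibleCurve M x₀ t γ) (hst : s ≤ t) : IsAdmissibleCurve M x₀ s γ where
  exists_lipschitzOnWith :=
    hγ.exists_lipschitzOnWith.imp fun _ hK => hK.mono (Icc_subset_Icc_right hst)
  mapsTo := hγ.mapsTo.mono_left (Icc_subset_Icc_right hst)
  apply_zero := hγ.apply_zero

theorem mem (hγ : IsAdmissibleCurve M x₀ t γ) (hs : s ∈ Icc 0 t) : γ s ∈ M :=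
  hγ.mapsTo hs

theorem concat (hη : IsAdmissibleCurve M x₀ s η) (hγ : IsAdmissibleCurve M y₀ t γ) (hs : 0 ≤ s)
    (h : η s = γ s) : IsAdmissibleCurve M x₀ t (concatAt s η γ) where
  exists_lipschitzOnWith := by
    obtain ⟨K, hK⟩ := hη.exists_lipschitzOnWith
    obtain ⟨N, hN⟩ := hγ.exists_lipschitzOnWith
    refine ⟨max K N, lipschitzOnWith_Icc_of_adjacent (b := s) ?_ ?_⟩
    · exact lipschitzOnWith_congr (hK.weaken (le_max_left _ _))
        fun τ hτ => eqOn_concatAt_Iic s η γ hτ.2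
    · exact lipschitzOnWith_congr ((hN.mono (Icc_subset_Icc_left hs)).weaken (le_max_right _ _))
        fun τ hτ => eqOn_concatAt_Ici h hτ.1
  mapsTo := by
    intro τ hτ
    rcases le_total τ s with hτs | hsτ
    · rw [eqOn_concatAt_Iic s η γ hτs]
      exact hη.mapsTo ⟨hτ.1, hτs⟩
    · rw [eqOn_concatAt_Ici h hsτ]
      exact hγ.mapsTo hτ
  apply_zero := (eqOn_concatAt_Iic s η γ hs).trans hη.apply_zero

end IsAdmissibleCurve

end Curves

section Action

variable {E : Type*} [NormedAddCommGroup E] [NormedSpace ℝ E]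

/-- The integrand of the implicit variational principle: the Lagrangian along `γ`, with the value
variable given by `h (γ τ) τ`. -/
def lagrangianAlong (L : E → E → ℝ → ℝ) (h : E → ℝ → ℝ) (γ : ℝ → E) (τ : ℝ) : ℝ :=
  L (γ τ) (deriv γ τ) (h (γ τ) τ)

/-- The action of `γ` between the times `a` and `b`. By the convention on Bochner integrals it is
`0` when the integrand is not integrable. -/
def curveAction (L : E → E → ℝ → ℝ) (h : E → ℝ → ℝ) (γ : ℝ → E) (a b : ℝ) : ℝ :=
  ∫ τ in a..b, lagrangianAlong L h γ τ

/-- The actions of the admissible curves from `x₀` that reach `x` at time `t`. -/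
def actionSet (M : Set E) (L : E → E → ℝ → ℝ) (h : E → ℝ → ℝ) (x₀ x : E) (t : ℝ) : Set ℝ :=
  {a | ∃ γ, IsAdmissibleCurve M x₀ t γ ∧ γ t = x ∧ curveAction L h γ 0 t = a}

variable {M : Set E} {L : E → E → ℝ → ℝ} {h : E → ℝ → ℝ} {x₀ x : E} {γ η : ℝ → E} {a b c s t : ℝ}

theorem lagrangianAlong_eqOn_of_isOpen {U : Set ℝ} (hU : IsOpen U) (hγη : EqOn γ η U) :
    EqOn (lagrangianAlong L h γ) (lagrangianAlong L h η) U := fun τ hτ => by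
  simp only [lagrangianAlong, hγη hτ, hγη.deriv hU hτ]

theorem curveAction_congr (hab : a ≤ b) (hγη : EqOn γ η (Ioo a b)) :
    curveAction L h γ a b = curveAction L h η a b :=
  intervalIntegral.integral_congr_Ioo_of_le hab (lagrangianAlong_eqOn_of_isOpen isOpen_Ioo hγη)

theorem curveAction_eq_zero (hγ : ¬IntervalIntegrable (lagrangianAlong L h γ) volume a b) :
    curveAction L h γ a b = 0 :=
  intervalIntegral.integral_undef hγ

theorem curveAction_add_adjacent (hγ : IntervalIntegrable (lagrangianAlong L h γ) volume a c)
    (hab : a ≤ b) (hbc : b ≤ c) :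
    curveAction L h γ a b + curveAction L h γ b c = curveAction L h γ a c :=
  intervalIntegral.integral_add_adjacent_intervals (intervalIntegrable_mono_Icc hγ le_rfl hab hbc)
    (intervalIntegrable_mono_Icc hγ hab hbc le_rfl)

theorem tendsto_curveAction_nhdsGT_left (hab : a < b)
    (hγ : IntervalIntegrable (lagrangianAlong L h γ) volume a b) :
    Tendsto (curveAction L h γ a) (𝓝[>] a) (𝓝 0) := by
  have hcont := intervalIntegral.continuousOn_primitive_interval' hγ left_mem_uIcc a left_mem_uIcc
  rw [uIcc_of_le hab.le] at hcont
  rw [ContinuousWithinAt, intervalIntegral.integral_same] at hcont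
  exact hcont.mono_left (nhdsWithin_le_of_mem (Icc_mem_nhdsGT hab))

theorem IsAdmissibleCurve.curveAction_add_mem_actionSet (hη : IsAdmissibleCurve M x₀ s η)
    (hγ : IsAdmissibleCurve M x₀ t γ) (hs : 0 ≤ s) (hst : s ≤ t) (heq : η s = γ s)
    (hη_int : IntervalIntegrable (lagrangianAlong L h η) volume 0 s)
    (hγ_int : IntervalIntegrable (lagrangianAlong L h γ) volume s t) :
    curveAction L h η 0 s + curveAction L h γ s t ∈ actionSet M L h x₀ (γ t) t := by
  set ζ := concatAt s η γ
  have hζη : EqOn ζ η (Ioo 0 s) := fun τ hτ => eqOn_concatAt_Iic s η γ hτ.2.le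
  have hζγ : EqOn ζ γ (Ioo s t) := fun τ hτ => eqOn_concatAt_Ici heq hτ.1.le
  have hζ_int₁ : IntervalIntegrable (lagrangianAlong L h ζ) volume 0 s := by
    refine hη_int.congr_uIoo ?_
    rw [uIoo_of_le hs]
    exact (lagrangianAlong_eqOn_of_isOpen isOpen_Ioo hζη).symm
  have hζ_int₂ : IntervalIntegrable (lagrangianAlong L h ζ) volume s t := by
    refine hγ_int.congr_uIoo ?_
    rw [uIoo_of_le hst]
    exact (lagrangianAlong_eqOn_of_isOpen isOpen_Ioo hζγ).symm
  refine ⟨ζ, hη.concat hγ hs heq, eqOn_concatAt_Ici heq hst, ?_⟩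
  rw [← curveAction_congr hs hζη, ← curveAction_congr hst hζγ,
    curveAction_add_adjacent (hζ_int₁.trans hζ_int₂) hs hst]

end Action

section RegularLagrangian

variable {E : Type*} [NormedAddCommGroup E] [MeasurableSpace E] {M : Set E} {L : E → E → ℝ → ℝ}
  {lam : ℝ}

/-- The regularity of a Lagrangian used in the analysis of implicit actions over `M`: it is
`lam`-Lipschitz in the value, bounded below over `M`, and bounded above over `M` and bounded
velocities. By the Lipschitz condition the bounds are only needed at the value `0`. -/
structure IsRegularLagrangian (M : Set E) (L : E → E → ℝ → ℝ) (lam : ℝ) : Prop where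
  measurable : Measurable fun z : E × E × ℝ => L z.1 z.2.1 z.2.2
  abs_sub_le : ∀ x v u w, |L x v u - L x v w| ≤ lam * |u - w|
  lower_bound : ∃ A, ∀ x ∈ M, ∀ v, -A ≤ L x v 0
  upper_bound : ∀ K, ∃ C, ∀ x ∈ M, ∀ v, ‖v‖ ≤ K → L x v 0 ≤ C

namespace IsRegularLagrangian

theorem lam_nonneg (hL : IsRegularLagrangian M L lam) : 0 ≤ lam := by
  simpa using (abs_nonneg _).trans (hL.abs_sub_le 0 0 1 0)

theorem exists_forall_neg_le (hL : IsRegularLagrangian M L lam) :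
    ∃ A ≥ 0, ∀ x ∈ M, ∀ v u, -A - lam * |u| ≤ L x v u := by
  obtain ⟨A, hA⟩ := hL.lower_bound
  refine ⟨max A 0, le_max_right _ _, fun x hx v u => ?_⟩
  have hlip := hL.abs_sub_le x v u 0
  rw [sub_zero] at hlip
  linarith [hA x hx v, (abs_le.mp hlip).1, le_max_left A 0]

theorem exists_forall_abs_le (hL : IsRegularLagrangian M L lam) (K : ℝ) :
    ∃ C, ∀ x ∈ M, ∀ v, ‖v‖ ≤ K → ∀ u, |L x v u| ≤ C + lam * |u| := by
  obtain ⟨A, hA⟩ := hL.lower_bound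
  obtain ⟨C, hC⟩ := hL.upper_bound K
  refine ⟨max A C, fun x hx v hv u => ?_⟩
  have habs : |L x v 0| ≤ max A C :=
    abs_le.mpr ⟨(neg_le_neg (le_max_left _ _)).trans (hA x hx v),
      (hC x hx v hv).trans (le_max_right _ _)⟩
  have hlip := hL.abs_sub_le x v u 0
  rw [sub_zero] at hlip
  linarith [abs_sub_abs_le_abs_sub (L x v u) (L x v 0)]

end IsRegularLagrangian

end RegularLagrangian

section ImplicitAction

variable {E : Type*} [NormedAddCommGroup E] [NormedSpace ℝ E] {M : Set E} {L : E → E → ℝ → ℝ}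
  {x₀ x : E} {u₀ lam ε s t T : ℝ} {h : E → ℝ → ℝ} {γ σ : ℝ → E}

/-- The implicit variational principle with initial point `x₀` and initial value `u₀`. The infimum
is a real `sInf`, so `h x t = u₀` when the set of actions is empty or unbounded below. -/
structure IsImplicitAction (M : Set E) (L : E → E → ℝ → ℝ) (x₀ : E) (u₀ : ℝ)
    (h : E → ℝ → ℝ) : Prop where
  continuousOn : ContinuousOn (Function.uncurry h) (M ×ˢ Ioi 0)
  eq_add_sInf : ∀ x ∈ M, ∀ t > 0, h x t = u₀ + sInf (actionSet M L h x₀ x t)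

theorem IsAdmissibleCurve.curveAction_mem_actionSet (hγ : IsAdmissibleCurve M x₀ t γ) :
    curveAction L h γ 0 t ∈ actionSet M L h x₀ (γ t) t :=
  ⟨γ, hγ, rfl, rfl⟩

namespace IsImplicitAction

theorem continuousOn_along (hh : IsImplicitAction M L x₀ u₀ h) (hγ : IsAdmissibleCurve M x₀ t γ) :
    ContinuousOn (fun τ => h (γ τ) τ) (Ioc 0 t) := by
  obtain ⟨K, hK⟩ := hγ.exists_lipschitzOnWith
  exact hh.continuousOn.comp (f := fun τ => (γ τ, τ))
    ((hK.continuousOn.mono Ioc_subset_Icc_self).prodMk continuousOn_id)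
    fun τ hτ => ⟨hγ.mem (Ioc_subset_Icc_self hτ), hτ.1⟩

theorem eq_of_not_nonempty (hh : IsImplicitAction M L x₀ u₀ h) (hx : x ∈ M) (ht : 0 < t)
    (hne : ¬(actionSet M L h x₀ x t).Nonempty) : h x t = u₀ := by
  rw [hh.eq_add_sInf x hx t ht, not_nonempty_iff_eq_empty.mp hne, Real.sInf_empty, add_zero]

theorem eq_of_not_bddBelow (hh : IsImplicitAction M L x₀ u₀ h) (hx : x ∈ M) (ht : 0 < t)
    (hbdd : ¬BddBelow (actionSet M L h x₀ x t)) : h x t = u₀ := by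
  rw [hh.eq_add_sInf x hx t ht, Real.sInf_of_not_bddBelow hbdd, add_zero]

theorem le_add_of_mem_actionSet (hh : IsImplicitAction M L x₀ u₀ h) (hx : x ∈ M) (ht : 0 < t)
    (hbdd : BddBelow (actionSet M L h x₀ x t)) {a : ℝ} (ha : a ∈ actionSet M L h x₀ x t) :
    h x t ≤ u₀ + a := by
  rw [hh.eq_add_sInf x hx t ht]
  gcongr
  exact csInf_le hbdd ha

theorem exists_add_curveAction_le (hh : IsImplicitAction M L x₀ u₀ h) (hx : x ∈ M) (ht : 0 < t)
    (hne : (actionSet M L h x₀ x t).Nonempty) (hε : 0 < ε) :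
    ∃ σ, IsAdmissibleCurve M x₀ t σ ∧ σ t = x ∧ u₀ + curveAction L h σ 0 t ≤ h x t + ε := by
  obtain ⟨_, ⟨σ, hσ, hσx, rfl⟩, hlt⟩ := exists_lt_of_csInf_lt hne (lt_add_of_pos_right _ hε)
  refine ⟨σ, hσ, hσx, ?_⟩
  rw [hh.eq_add_sInf x hx t ht, add_assoc]
  gcongr

theorem le_add_abs_curveAction (hh : IsImplicitAction M L x₀ u₀ h)
    (hγ : IsAdmissibleCurve M x₀ t γ) (ht : 0 < t) :
    h (γ t) t ≤ u₀ + |curveAction L h γ 0 t| := by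
  have hγt : γ t ∈ M := hγ.mem (right_mem_Icc.mpr ht.le)
  by_cases hbdd : BddBelow (actionSet M L h x₀ (γ t) t)
  · exact (hh.le_add_of_mem_actionSet hγt ht hbdd hγ.curveAction_mem_actionSet).trans
      (by gcongr; exact le_abs_self _)
  · rw [hh.eq_of_not_bddBelow hγt ht hbdd]
    exact le_add_of_nonneg_right (abs_nonneg _)

/-- An action below both bounds would belong to a curve with integrable Lagrangian, and following
that curve up to time `s` would improve on `σ` by more than `ε`. -/
theorem min_le_of_mem_actionSet (hh : IsImplicitAction M L x₀ u₀ h)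
    (hσ : IsAdmissibleCurve M x₀ t σ) (hbdd : BddBelow (actionSet M L h x₀ (σ t) t))
    (hint : IntervalIntegrable (lagrangianAlong L h σ) volume 0 t)
    (hopt : u₀ + curveAction L h σ 0 t ≤ h (σ t) t + ε) (hs : s ∈ Ioc 0 t) :
    ∀ a ∈ actionSet M L h x₀ (σ s) s, min 0 (curveAction L h σ 0 s - ε) ≤ a := by
  rintro _ ⟨η, hη, heq, rfl⟩
  by_cases hη_int : IntervalIntegrable (lagrangianAlong L h η) volume 0 s
  · have ht : 0 < t := hs.1.trans_le hs.2
    have hle := hh.le_add_of_mem_actionSet (hσ.mem (right_mem_Icc.mpr ht.le)) ht hbdd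
      (hη.curveAction_add_mem_actionSet hσ hs.1.le hs.2 heq hη_int
        (intervalIntegrable_mono_Icc hint hs.1.le hs.2 le_rfl))
    rw [← curveAction_add_adjacent hint hs.1.le hs.2] at hopt
    exact (min_le_right _ _).trans (by linarith)
  · rw [curveAction_eq_zero hη_int]
    exact min_le_left _ _

theorem abs_le_add_abs_curveAction (hh : IsImplicitAction M L x₀ u₀ h)
    (hσ : IsAdmissibleCurve M x₀ t σ) (hbdd : BddBelow (actionSet M L h x₀ (σ t) t))
    (hint : IntervalIntegrable (lagrangianAlong L h σ) volume 0 t) (hε : 0 ≤ ε)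
    (hopt : u₀ + curveAction L h σ 0 t ≤ h (σ t) t + ε) (hs : s ∈ Ioc 0 t) :
    |h (σ s) s| ≤ |u₀| + ε + |curveAction L h σ 0 s| := by
  have hσs := hσ.mono hs.2
  have hlow := le_csInf ⟨_, hσs.curveAction_mem_actionSet⟩
    (hh.min_le_of_mem_actionSet hσ hbdd hint hopt hs)
  have hmin : -(ε + |curveAction L h σ 0 s|) ≤ min 0 (curveAction L h σ 0 s - ε) :=
    le_min (neg_nonpos.mpr (by positivity)) (by linarith [neg_abs_le (curveAction L h σ 0 s)])
  have hup := hh.le_add_abs_curveAction hσs hs.1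
  have heq := hh.eq_add_sInf (σ s) (hσ.mem (Ioc_subset_Icc_self hs)) s hs.1
  exact abs_le.mpr ⟨by linarith [neg_abs_le u₀], by linarith [le_abs_self u₀]⟩

end IsImplicitAction

namespace IsRegularLagrangian

variable [MeasurableSpace E]

theorem exists_forall_neg_le_curveAction (hL : IsRegularLagrangian M L lam) {D : ℝ} (hD : 0 ≤ D)
    (hT : 0 ≤ T) : ∃ B ≥ 0, ∀ {h : E → ℝ → ℝ} {γ : ℝ → E} {t : ℝ}, t ∈ Icc 0 T →
      MapsTo γ (Icc 0 t) M → IntervalIntegrable (lagrangianAlong L h γ) volume 0 t →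
      (∀ s ∈ Ioo 0 t, |h (γ s) s| ≤ D + |curveAction L h γ 0 s|) →
      -B ≤ curveAction L h γ 0 t := by
  obtain ⟨A, hA0, hA⟩ := hL.exists_forall_neg_le
  have hlam := hL.lam_nonneg
  refine ⟨(A + lam * D) * T * Real.exp (lam * T), by positivity, fun {h γ t} ht hM hint hval => ?_⟩
  calc -((A + lam * D) * T * Real.exp (lam * T))
      ≤ -((A + lam * D) * t * Real.exp (lam * t)) := by gcongr <;> exact ht.2
    _ ≤ curveAction L h γ 0 t := neg_mul_exp_le_integral_of_le (by positivity) hlam ht.1 hint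
      fun s hs => by
        have hlow := hA (γ s) (hM (Ioo_subset_Icc_self hs)) (deriv γ s) (h (γ s) s)
        have hmul := mul_le_mul_of_nonneg_left (hval s hs) hlam
        rw [curveAction] at hmul
        rw [lagrangianAlong]
        linarith

theorem curveAction_sub_le (hL : IsRegularLagrangian M L lam) {h₁ h₂ : E → ℝ → ℝ} (hst : s ≤ t)
    (h₁_int : IntervalIntegrable (lagrangianAlong L h₁ γ) volume s t)
    (h₂_int : IntervalIntegrable (lagrangianAlong L h₂ γ) volume s t)
    (hint : IntervalIntegrable (fun τ => h₂ (γ τ) τ - h₁ (γ τ) τ) volume s t)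
    (hle : ∀ τ ∈ Ioo s t, h₁ (γ τ) τ ≤ h₂ (γ τ) τ) :
    curveAction L h₁ γ s t - curveAction L h₂ γ s t ≤
      lam * ∫ τ in s..t, (h₂ (γ τ) τ - h₁ (γ τ) τ) := by
  rw [curveAction, curveAction, ← intervalIntegral.integral_sub h₁_int h₂_int,
    ← intervalIntegral.integral_const_mul]
  refine intervalIntegral.integral_mono_on_of_le_Ioo hst (h₁_int.sub h₂_int)
    (hint.const_mul lam) fun τ hτ => ?_
  have hlip := hL.abs_sub_le (γ τ) (deriv γ τ) (h₁ (γ τ) τ) (h₂ (γ τ) τ)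
  rw [abs_sub_comm (h₁ _ _), abs_of_nonneg (sub_nonneg.mpr (hle τ hτ))] at hlip
  exact (le_abs_self _).trans hlip

end IsRegularLagrangian

theorem IsImplicitAction.exists_forall_neg_le [MeasurableSpace E]
    (hh : IsImplicitAction M L x₀ u₀ h) (hL : IsRegularLagrangian M L lam) (hT : 0 ≤ T) :
    ∃ C ≥ 0, ∀ t ∈ Ioc 0 T, ∀ x ∈ M, -C ≤ h x t := by
  obtain ⟨B, hB0, hB⟩ := hL.exists_forall_neg_le_curveAction (D := |u₀| + 1) (by positivity) hT
  refine ⟨|u₀| + 1 + B, by positivity, fun t ht x hx => ?_⟩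
  have hu := neg_abs_le u₀
  by_cases hne : (actionSet M L h x₀ x t).Nonempty
  swap
  · rw [hh.eq_of_not_nonempty hx ht.1 hne]
    linarith
  by_cases hbdd : BddBelow (actionSet M L h x₀ x t)
  swap
  · rw [hh.eq_of_not_bddBelow hx ht.1 hbdd]
    linarith
  obtain ⟨σ, hσ, rfl, hopt⟩ := hh.exists_add_curveAction_le hx ht.1 hne one_pos
  suffices -B ≤ curveAction L h σ 0 t by linarith
  by_cases hint : IntervalIntegrable (lagrangianAlong L h σ) volume 0 t
  · exact hB (Ioc_subset_Icc_self ht) hσ.mapsTo hint fun s hs =>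
      hh.abs_le_add_abs_curveAction hσ hbdd hint zero_le_one hopt (Ioo_subset_Ioc_self hs)
  · rw [curveAction_eq_zero hint]
    exact neg_nonpos.mpr hB0

theorem IsImplicitAction.exists_forall_abs_le [MeasurableSpace E]
    (hh : IsImplicitAction M L x₀ u₀ h) (hL : IsRegularLagrangian M L lam) (hT : 0 ≤ T) :
    ∃ D ≥ 0, ∀ {γ : ℝ → E}, ∀ t ∈ Ioc 0 T, IsAdmissibleCurve M x₀ t γ →
      |h (γ t) t| ≤ D + |curveAction L h γ 0 t| := by
  obtain ⟨C, hC0, hC⟩ := hh.exists_forall_neg_le hL hT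
  refine ⟨C + |u₀|, by positivity, fun {γ} t ht hγ => abs_le.mpr ⟨?_, ?_⟩⟩
  · have hlow := hC t ht (γ t) (hγ.mem (right_mem_Icc.mpr ht.1.le))
    linarith [abs_nonneg u₀, abs_nonneg (curveAction L h γ 0 t)]
  · linarith [hh.le_add_abs_curveAction hγ ht.1, le_abs_self u₀]

section Integrability

variable [MeasurableSpace E] [BorelSpace E] [CompleteSpace E]

namespace IsAdmissibleCurve

theorem intervalIntegrable_of_abs_le (hγ : IsAdmissibleCurve M x₀ t γ)
    (hL : IsRegularLagrangian M L lam) (hh : IsImplicitAction M L x₀ u₀ h) (hs : 0 ≤ s)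
    (hst : s ≤ t) {C : ℝ} (hC : ∀ τ ∈ Ioo s t, |h (γ τ) τ| ≤ C) :
    IntervalIntegrable (lagrangianAlong L h γ) volume s t := by
  obtain ⟨K, hK⟩ := hγ.exists_lipschitzOnWith
  obtain ⟨D, hD⟩ := hL.exists_forall_abs_le K
  have hsub : Ioo s t ⊆ Ioc 0 t := fun τ hτ => ⟨hs.trans_lt hτ.1, hτ.2.le⟩
  have hmeas : AEMeasurable (lagrangianAlong L h γ) (volume.restrict (Ioo s t)) :=
    hL.measurable.comp_aemeasurable (f := fun τ => (γ τ, deriv γ τ, h (γ τ) τ)) <|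
      ((hK.continuousOn.mono (hsub.trans Ioc_subset_Icc_self)).aemeasurable
        measurableSet_Ioo).prodMk <| (measurable_deriv γ).aemeasurable.prodMk <|
          ((hh.continuousOn_along hγ).mono hsub).aemeasurable measurableSet_Ioo
  rw [intervalIntegrable_iff_integrableOn_Ioo_of_le hst]
  refine Integrable.of_bound hmeas.aestronglyMeasurable (D + lam * C) ?_
  filter_upwards [ae_restrict_mem measurableSet_Ioo] with τ hτ
  have hderiv : ‖deriv γ τ‖ ≤ K :=
    norm_deriv_le_of_lipschitzOn (Icc_mem_nhds (hsub hτ).1 hτ.2) hK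
  calc ‖lagrangianAlong L h γ τ‖ ≤ D + lam * |h (γ τ) τ| :=
        hD (γ τ) (hγ.mem (Ioc_subset_Icc_self (hsub hτ))) _ hderiv _
    _ ≤ D + lam * C := by gcongr; exacts [hL.lam_nonneg, hC τ hτ]

theorem intervalIntegrable_of_pos (hγ : IsAdmissibleCurve M x₀ t γ)
    (hL : IsRegularLagrangian M L lam) (hh : IsImplicitAction M L x₀ u₀ h) (hs : 0 < s)
    (hst : s ≤ t) : IntervalIntegrable (lagrangianAlong L h γ) volume s t := by
  obtain ⟨C, hC⟩ := isCompact_Icc.exists_bound_of_continuousOn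
    ((hh.continuousOn_along hγ).mono fun τ (hτ : τ ∈ Icc s t) => ⟨hs.trans_le hτ.1, hτ.2⟩)
  exact hγ.intervalIntegrable_of_abs_le hL hh hs.le hst fun τ hτ => hC τ (Ioo_subset_Icc_self hτ)

/-- If the Lagrangian were not integrable near `0`, all actions along `γ` would be `0` by
convention, so `h` would be bounded along `γ` and the Lagrangian integrable after all. -/
theorem intervalIntegrable (hγ : IsAdmissibleCurve M x₀ t γ) (hL : IsRegularLagrangian M L lam)
    (hh : IsImplicitAction M L x₀ u₀ h) (ht : 0 ≤ t) :
    IntervalIntegrable (lagrangianAlong L h γ) volume 0 t := by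
  by_contra hint
  obtain ⟨D, -, hD⟩ := hh.exists_forall_abs_le hL ht
  refine hint (hγ.intervalIntegrable_of_abs_le hL hh le_rfl ht (C := D) fun s hs => ?_)
  have hs_int : ¬IntervalIntegrable (lagrangianAlong L h γ) volume 0 s := fun hi =>
    hint (hi.trans (hγ.intervalIntegrable_of_pos hL hh hs.1 hs.2.le))
  simpa [curveAction_eq_zero hs_int] using hD s (Ioo_subset_Ioc_self hs) (hγ.mono hs.2.le)

end IsAdmissibleCurve

namespace IsImplicitAction

theorem bddBelow_actionSet (hh : IsImplicitAction M L x₀ u₀ h) (hL : IsRegularLagrangian M L lam)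
    (ht : 0 ≤ t) : BddBelow (actionSet M L h x₀ x t) := by
  obtain ⟨D, hD0, hD⟩ := hh.exists_forall_abs_le hL ht
  obtain ⟨B, -, hB⟩ := hL.exists_forall_neg_le_curveAction hD0 ht
  refine ⟨-B, ?_⟩
  rintro _ ⟨γ, hγ, -, rfl⟩
  exact hB (right_mem_Icc.mpr ht) hγ.mapsTo (hγ.intervalIntegrable hL hh ht) fun s hs =>
    hD s (Ioo_subset_Ioc_self hs) (hγ.mono hs.2.le)

theorem le_add_curveAction_zero (hh : IsImplicitAction M L x₀ u₀ h)
    (hL : IsRegularLagrangian M L lam) (hγ : IsAdmissibleCurve M x₀ t γ) (ht : 0 < t) :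
    h (γ t) t ≤ u₀ + curveAction L h γ 0 t :=
  hh.le_add_of_mem_actionSet (hγ.mem (right_mem_Icc.mpr ht.le)) ht (hh.bddBelow_actionSet hL ht.le)
    hγ.curveAction_mem_actionSet

theorem le_add_curveAction (hh : IsImplicitAction M L x₀ u₀ h) (hL : IsRegularLagrangian M L lam)
    (hγ : IsAdmissibleCurve M x₀ t γ) (hs : 0 < s) (hst : s ≤ t) :
    h (γ t) t ≤ h (γ s) s + curveAction L h γ s t := by
  have ht := hs.trans_le hst
  refine le_of_forall_pos_le_add fun ε hε => ?_
  obtain ⟨η, hη, heq, hopt⟩ := hh.exists_add_curveAction_le (hγ.mem ⟨hs.le, hst⟩) hs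
    ⟨_, (hγ.mono hst).curveAction_mem_actionSet⟩ hε
  have hmem := hη.curveAction_add_mem_actionSet hγ hs.le hst heq (hη.intervalIntegrable hL hh hs.le)
    (hγ.intervalIntegrable_of_pos hL hh hs hst)
  have hle := hh.le_add_of_mem_actionSet (hγ.mem (right_mem_Icc.mpr ht.le)) ht
    (hh.bddBelow_actionSet hL ht.le) hmem
  linarith

theorem add_curveAction_zero_le_of_le (hh : IsImplicitAction M L x₀ u₀ h)
    (hL : IsRegularLagrangian M L lam) (hσ : IsAdmissibleCurve M x₀ t σ)
    (hopt : u₀ + curveAction L h σ 0 t ≤ h (σ t) t + ε) (hs : s ∈ Ioc 0 t) :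
    u₀ + curveAction L h σ 0 s ≤ h (σ s) s + ε := by
  have hsplit := curveAction_add_adjacent
    (hσ.intervalIntegrable hL hh (hs.1.le.trans hs.2)) hs.1.le hs.2
  linarith [hh.le_add_curveAction hL hσ hs.1 hs.2]

theorem add_curveAction_le_of_le (hh : IsImplicitAction M L x₀ u₀ h)
    (hL : IsRegularLagrangian M L lam) (hσ : IsAdmissibleCurve M x₀ t σ)
    (hopt : u₀ + curveAction L h σ 0 t ≤ h (σ t) t + ε) {r : ℝ} (hr : 0 < r) (hrs : r ≤ s)
    (hst : s ≤ t) : h (σ r) r + curveAction L h σ r s ≤ h (σ s) s + ε := by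
  have hs := hr.trans_le hrs
  have hsplit := curveAction_add_adjacent
    ((hσ.mono hst).intervalIntegrable hL hh hs.le) hr.le hrs
  linarith [hh.add_curveAction_zero_le_of_le hL hσ hopt ⟨hs, hst⟩,
    hh.le_add_curveAction_zero hL (hσ.mono (hrs.trans hst)) hr]

section Comparison

variable {u₁ u₂ : ℝ} {h₁ h₂ : E → ℝ → ℝ}

theorem sub_le_mul_exp_of_le (hh₁ : IsImplicitAction M L x₀ u₁ h₁)
    (hh₂ : IsImplicitAction M L x₀ u₂ h₂) (hL : IsRegularLagrangian M L lam) (hε : 0 ≤ ε)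
    (hσ : IsAdmissibleCurve M x₀ t σ) (hopt : u₂ + curveAction L h₂ σ 0 t ≤ h₂ (σ t) t + ε)
    (hle : h₂ (σ t) t ≤ h₁ (σ t) t) (hs : s ∈ Ioc 0 t) :
    h₂ (σ s) s - h₁ (σ s) s ≤ ε * Real.exp (lam * (t - s)) := by
  have hcont : ContinuousOn (fun τ => h₂ (σ τ) τ - h₁ (σ τ) τ) (Icc s t) :=
    ((hh₂.continuousOn_along hσ).sub (hh₁.continuousOn_along hσ)).mono
      fun τ hτ => ⟨hs.1.trans_le hτ.1, hτ.2⟩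
  refine le_mul_exp_of_le_integral_of_pos_left hε hL.lam_nonneg hcont (sub_nonpos.mpr hle)
    (fun r q hr hrq hq hfq hpos => ?_) s (left_mem_Icc.mpr hs.2)
  have hr0 : 0 < r := hs.1.trans_le hr
  have hσq := hσ.mono hq
  have hlip := hL.curveAction_sub_le hrq.le (hσq.intervalIntegrable_of_pos hL hh₁ hr0 hrq.le)
    (hσq.intervalIntegrable_of_pos hL hh₂ hr0 hrq.le)
    ((hcont.mono (Icc_subset_Icc hr hq)).intervalIntegrable_of_Icc hrq.le)
    fun τ hτ => (sub_pos.mp (hpos τ (Ioo_subset_Ico_self hτ))).le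
  have hdp₁ := hh₁.le_add_curveAction hL hσq hr0 hrq.le
  have hdp₂ := hh₂.add_curveAction_le_of_le hL hσ hopt hr0 hrq.le hq
  linarith

theorem sub_le_mul_one_add_exp_of_le (hh₁ : IsImplicitAction M L x₀ u₁ h₁)
    (hh₂ : IsImplicitAction M L x₀ u₂ h₂) (hL : IsRegularLagrangian M L lam) (hε : 0 ≤ ε)
    (ht : 0 < t) (hσ : IsAdmissibleCurve M x₀ t σ)
    (hopt : u₂ + curveAction L h₂ σ 0 t ≤ h₂ (σ t) t + ε) (hle : h₂ (σ t) t ≤ h₁ (σ t) t) :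
    u₂ - u₁ ≤ ε * (1 + Real.exp (lam * t)) := by
  have hlim₁ := tendsto_curveAction_nhdsGT_left ht (hσ.intervalIntegrable hL hh₁ ht.le)
  have hlim₂ := tendsto_curveAction_nhdsGT_left ht (hσ.intervalIntegrable hL hh₂ ht.le)
  have hlim := ((hlim₂.const_add u₂).sub (hlim₁.const_add u₁)).sub_const ε
  rw [add_zero, add_zero] at hlim
  suffices u₂ - u₁ - ε ≤ ε * Real.exp (lam * t) by linarith
  refine le_of_tendsto hlim ?_
  filter_upwards [Ioo_mem_nhdsGT ht] with s hs
  have hs' := Ioo_subset_Ioc_self hs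
  calc u₂ + curveAction L h₂ σ 0 s - (u₁ + curveAction L h₁ σ 0 s) - ε
      ≤ h₂ (σ s) s - h₁ (σ s) s := by
        linarith [hh₂.add_curveAction_zero_le_of_le hL hσ hopt hs',
          hh₁.le_add_curveAction_zero hL (hσ.mono hs.2.le) hs.1]
    _ ≤ ε * Real.exp (lam * (t - s)) := hh₁.sub_le_mul_exp_of_le hh₂ hL hε hσ hopt hle hs'
    _ ≤ ε * Real.exp (lam * t) := by
        gcongr
        exacts [hL.lam_nonneg, sub_le_self _ hs.1.le]

theorem lt_of_lt (hh₁ : IsImplicitAction M L x₀ u₁ h₁) (hh₂ : IsImplicitAction M L x₀ u₂ h₂)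
    (hL : IsRegularLagrangian M L lam) (hu : u₁ < u₂) (ht : 0 < t) (hx : x ∈ M) :
    h₁ x t < h₂ x t := by
  by_cases hne : (actionSet M L h₂ x₀ x t).Nonempty
  swap
  · have hne₁ : ¬(actionSet M L h₁ x₀ x t).Nonempty := fun ⟨_, γ, hγ, hγx, _⟩ =>
      hne ⟨_, γ, hγ, hγx, rfl⟩
    rwa [hh₁.eq_of_not_nonempty hx ht hne₁, hh₂.eq_of_not_nonempty hx ht hne]
  by_contra! hle
  have hE : 0 < 1 + Real.exp (lam * t) := by positivity
  have hε : 0 < (u₂ - u₁) / 2 / (1 + Real.exp (lam * t)) :=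
    div_pos (half_pos (sub_pos.mpr hu)) hE
  obtain ⟨σ, hσ, rfl, hopt⟩ := hh₂.exists_add_curveAction_le hx ht hne hε
  have hbound := hh₁.sub_le_mul_one_add_exp_of_le hh₂ hL hε.le ht hσ hopt hle
  rw [div_mul_cancel₀ _ hE.ne'] at hbound
  linarith

end Comparison

end IsImplicitAction

end Integrability

end ImplicitAction

section Legendre

variable {E : Type*} [NormedAddCommGroup E] [InnerProductSpace ℝ E] {H : E → E → ℝ → ℝ} {lam : ℝ}

/-- A weak form of the Tonelli conditions on a contact Hamiltonian: continuity, convexity and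
superlinearity in the momentum, and the `lam`-Lipschitz condition in the value. -/
structure IsWeakTonelli (H : E → E → ℝ → ℝ) (lam : ℝ) : Prop where
  continuous : Continuous fun z : E × E × ℝ => H z.1 z.2.1 z.2.2
  convexOn : ∀ x u, ConvexOn ℝ univ fun p => H x p u
  superlinear : ∀ x u, Tendsto (fun p => H x p u / ‖p‖) (Bornology.cobounded E) atTop
  abs_sub_le : ∀ x p u w, |H x p u - H x p w| ≤ lam * |u - w|

/-- The Lagrangian `L(x, v, u) = sup_p (⟨p, v⟩ - H(x, p, u))`, with the junk value `0` where the
supremum is infinite. -/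
def legendreTransform (H : E → E → ℝ → ℝ) (x v : E) (u : ℝ) : ℝ :=
  ⨆ p, (⟪p, v⟫ - H x p u)

namespace IsWeakTonelli

variable [ProperSpace E]

theorem exists_forall_inner_sub_le (hH : IsWeakTonelli H lam) {S : Set E} (hS : IsCompact S)
    (K : ℝ) : ∃ C, ∀ x ∈ S, ∀ v, ‖v‖ ≤ K → ∀ p u, ⟪p, v⟫ - H x p u ≤ C + lam * |u| := by
  obtain ⟨C, hC⟩ := exists_forall_mul_norm_sub_le (f := fun x p => H x p 0) hS
    (hH.continuous.comp (f := fun z : E × E => (z.1, z.2, (0 : ℝ))) (by fun_prop))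
    (fun x => hH.convexOn x 0) (fun x => hH.superlinear x 0) K
  refine ⟨C, fun x hx v hv p u => ?_⟩
  have hinner : ⟪p, v⟫ ≤ K * ‖p‖ := calc
    ⟪p, v⟫ ≤ ‖p‖ * ‖v‖ := real_inner_le_norm p v
    _ ≤ K * ‖p‖ := by rw [mul_comm]; gcongr
  have hlip := hH.abs_sub_le x p u 0
  rw [sub_zero] at hlip
  linarith [hC x hx p, (abs_le.mp hlip).1]

theorem bddAbove_range (hH : IsWeakTonelli H lam) (x v : E) (u : ℝ) :
    BddAbove (range fun p => ⟪p, v⟫ - H x p u) := by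
  obtain ⟨C, hC⟩ := hH.exists_forall_inner_sub_le (isCompact_singleton (x := x)) ‖v‖
  exact ⟨C + lam * |u|, forall_mem_range.mpr fun p => hC x rfl v le_rfl p u⟩

theorem inner_sub_le_legendreTransform (hH : IsWeakTonelli H lam) (x p v : E) (u : ℝ) :
    ⟪p, v⟫ - H x p u ≤ legendreTransform H x v u :=
  le_ciSup (hH.bddAbove_range x v u) p

theorem legendreTransform_le_add (hH : IsWeakTonelli H lam) (x v : E) (u w : ℝ) :
    legendreTransform H x v u ≤ legendreTransform H x v w + lam * |u - w| :=
  ciSup_le fun p => by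
    linarith [hH.inner_sub_le_legendreTransform x p v w, (abs_le.mp (hH.abs_sub_le x p u w)).1]

theorem abs_legendreTransform_sub_le (hH : IsWeakTonelli H lam) (x v : E) (u w : ℝ) :
    |legendreTransform H x v u - legendreTransform H x v w| ≤ lam * |u - w| := by
  refine abs_sub_le_iff.mpr ⟨by linarith [hH.legendreTransform_le_add x v u w], ?_⟩
  rw [abs_sub_comm]
  linarith [hH.legendreTransform_le_add x v w u]

theorem lowerSemicontinuous_legendreTransform (hH : IsWeakTonelli H lam) :
    LowerSemicontinuous fun z : E × E × ℝ => legendreTransform H z.1 z.2.1 z.2.2 :=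
  lowerSemicontinuous_ciSup (fun z => hH.bddAbove_range z.1 z.2.1 z.2.2) fun p =>
    Continuous.lowerSemicontinuous <| Continuous.sub (by fun_prop) <|
      hH.continuous.comp (f := fun z : E × E × ℝ => (z.1, p, z.2.2)) (by fun_prop)

theorem isRegularLagrangian [MeasurableSpace E] [BorelSpace E] (hH : IsWeakTonelli H lam)
    {M : Set E} (hM : IsCompact M) : IsRegularLagrangian M (legendreTransform H) lam where
  measurable := hH.lowerSemicontinuous_legendreTransform.measurable
  abs_sub_le := hH.abs_legendreTransform_sub_le
  lower_bound := by
    have hcont : Continuous fun x => H x 0 0 :=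
      hH.continuous.comp (f := fun x : E => (x, (0 : E), (0 : ℝ))) (by fun_prop)
    obtain ⟨A, hA⟩ := hM.bddAbove_image hcont.continuousOn
    refine ⟨A, fun x hx v => ?_⟩
    have hzero := hH.inner_sub_le_legendreTransform x 0 v 0
    rw [inner_zero_left, zero_sub] at hzero
    exact (neg_le_neg (hA (mem_image_of_mem _ hx))).trans hzero
  upper_bound K := by
    obtain ⟨C, hC⟩ := hH.exists_forall_inner_sub_le hM K
    exact ⟨C, fun x hx v hv => ciSup_le fun p => by simpa using hC x hx v hv p 0⟩

end IsWeakTonelli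

end Legendre

section Euclidean

variable {H L : Euc n → Euc n → ℝ → ℝ} {lam : ℝ}

namespace C3

theorem contDiff_momentum (hH : C3 H) (x : Euc n) (u : ℝ) : ContDiff ℝ 3 fun p => H x p u :=
  ContDiff.comp (g := fun z : Euc n × Euc n × ℝ => H z.1 z.2.1 z.2.2) hH
    (f := fun p => (x, p, u)) (by fun_prop)

theorem contDiff_value (hH : C3 H) (x p : Euc n) : ContDiff ℝ 3 fun u => H x p u :=
  ContDiff.comp (g := fun z : Euc n × Euc n × ℝ => H z.1 z.2.1 z.2.2) hH
    (f := fun u => (x, p, u)) (by fun_prop)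

theorem convexOn_momentum (hH : C3 H) (hpos : PosDefInP H) (x : Euc n) (u : ℝ) :
    ConvexOn ℝ univ fun p => H x p u := by
  have hf := hH.contDiff_momentum x u
  have hgrad : ContDiff ℝ 2 (gradient fun p => H x p u) :=
    (InnerProductSpace.toDual ℝ (Euc n)).symm.contDiff.comp (hf.fderiv_right (by norm_num))
  refine convexOn_univ_of_inner_fderiv_gradient_nonneg (hf.differentiable (by norm_num))
    (hgrad.differentiable (by norm_num)) fun p v => ?_
  rcases eq_or_ne v 0 with rfl | hv
  · rw [inner_zero_right]
  · exact (hpos x u p v hv).le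

theorem isWeakTonelli (hH : C3 H) (hpos : PosDefInP H) (hsup : Superlinear H)
    (hlip : LipInU H lam) : IsWeakTonelli H lam where
  continuous := ContDiff.continuous hH
  convexOn := hH.convexOn_momentum hpos
  superlinear x u := by
    rw [Metric.cobounded_eq_cocompact]
    exact hsup x u
  abs_sub_le x p _ _ := convex_univ.norm_image_sub_le_of_norm_deriv_le
    (fun _ _ => ((hH.contDiff_value x p).differentiable (by norm_num)).differentiableAt)
    (fun u _ => hlip x p u) (mem_univ _) (mem_univ _)

end C3

theorem IsLegendre.eq_legendreTransform (hL : IsLegendre H L) : L = legendreTransform H := by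
  ext x v u
  rw [hL x v u, legendreTransform, iSup]
  congr 1
  ext r
  exact exists_congr fun _ => eq_comm

theorem IsBackwardAction.isImplicitAction {M : Set (Euc n)} {hb : Euc n → ℝ → Euc n → ℝ → ℝ}
    (hhb : IsBackwardAction M L hb) {x₀ : Euc n} (hx₀ : x₀ ∈ M) (u₀ : ℝ) :
    IsImplicitAction M L x₀ u₀ (hb x₀ u₀) where
  continuousOn := hhb.1.comp (f := fun q : Euc n × ℝ => (x₀, u₀, q.1, q.2))
    (Continuous.continuousOn (by fun_prop)) fun _ hq => ⟨hx₀, mem_univ _, hq.1, hq.2⟩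
  eq_add_sInf x hx t ht := by
    rw [hhb.2 x₀ hx₀ u₀ x hx t ht]
    congr 2
    ext a
    constructor
    · rintro ⟨γ, hlip, hM, h0, ht, rfl⟩
      exact ⟨γ, ⟨hlip, hM, h0⟩, ht, rfl⟩
    · rintro ⟨γ, ⟨hlip, hM, h0⟩, ht, rfl⟩
      exact ⟨γ, hlip, hM, h0, ht, rfl⟩

end Euclidean

theorem backward_action_monotone_general {E : Type*} [NormedAddCommGroup E] [InnerProductSpace ℝ E]
    [ProperSpace E] [MeasurableSpace E] [BorelSpace E] {H : E → E → ℝ → ℝ} {lam : ℝ}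
    (hH : IsWeakTonelli H lam) {M : Set E} (hM : IsCompact M) {x₀ : E} {u₁ u₂ : ℝ}
    {h₁ h₂ : E → ℝ → ℝ} (hh₁ : IsImplicitAction M (legendreTransform H) x₀ u₁ h₁)
    (hh₂ : IsImplicitAction M (legendreTransform H) x₀ u₂ h₂) (hu : u₁ < u₂) {t : ℝ} (ht : 0 < t)
    {x : E} (hx : x ∈ M) : h₁ x t < h₂ x t :=
  hh₁.lt_of_lt hh₂ (hH.isRegularLagrangian hM) hu ht hx

/-- **Proposition 2.2(2) (Monotonicity)**: the backward implicit action function is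
strictly increasing in the initial value `u₀`. -/
theorem backward_action_monotone {n : ℕ}
    (H L : Euc n → Euc n → ℝ → ℝ) (lam : ℝ) (hlam : 0 < lam)
    (hC3 : C3 H) (hH1 : PosDefInP H) (hH2 : Superlinear H) (hH3 : LipInU H lam)
    (M : Set (Euc n)) (hM : IsCompact M) (hMconn : IsConnected M)
    (Φ : ℝ → Euc n × Euc n × ℝ → Euc n × Euc n × ℝ) (hΦ : IsContactFlow H Φ)
    (hLeg : IsLegendre H L)
    (hb : Euc n → ℝ → Euc n → ℝ → ℝ) (hhb : IsBackwardAction M L hb) :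
    ∀ x₀ ∈ M, ∀ u₁ u₂ : ℝ, u₁ < u₂ → ∀ t > (0:ℝ), ∀ x ∈ M,
      hb x₀ u₁ x t < hb x₀ u₂ x t := by
  intro x₀ hx₀ u₁ u₂ hu t ht x hx
  obtain rfl := hLeg.eq_legendreTransform
  exact backward_action_monotone_general (hC3.isWeakTonelli hH1 hH2 hH3) hM
    (hhb.isImplicitAction hx₀ u₁) (hhb.isImplicitAction hx₀ u₂) hu ht hx

end
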